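/- For every n ≥ 1, the polynomial T_n(x) = Σ_{k=0}^{n} T_{n,k} x^k has n distinct negative real roots (i.e., T_n has exactly n roots, all real, negative, and pairwise distinct). -/

import Mathlib

open Polynomial

def Tnk (m c : ℕ) : ℕ → ℕ → ℕ
  | 0, 0 => 1
  | 0, _ + 1 => 0
  | n + 1, 0 => c * Tnk m c n 0
  | n + 1, k + 1 => Tnk m c n k + (m * (k + 1) + c) * Tnk m c n (k + 1)

/-- The polynomial `T_n(x) = ∑_{k=0}^n T_{n,k} x^k`. -/
noncomputable def Tpoly (m c n : ℕ) : Polynomial ℝ :=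
  ∑ k ∈ Finset.range (n + 1), C (Tnk m c n k : ℝ) * X ^ k

lemma Tnk_zero_of_lt (m c : ℕ) : ∀ n k, n < k → Tnk m c n k = 0
  | 0, 0, h => by omega
  | 0, k + 1, _ => by simp [Tnk]
  | n + 1, 0, h => by omega
  | n + 1, k + 1, h => by
      simp [Tnk, Tnk_zero_of_lt m c n k (by omega), Tnk_zero_of_lt m c n (k + 1) (by omega)]

lemma Tnk_self (m c : ℕ) : ∀ n, Tnk m c n n = 1
  | 0 => by simp [Tnk]
  | n + 1 => by simp [Tnk, Tnk_self m c n, Tnk_zero_of_lt m c n (n + 1) (by omega)]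

lemma Tpoly_coeff (m c n k : ℕ) : (Tpoly m c n).coeff k = Tnk m c n k := by
  simp only [Tpoly, finsetSum_coeff, coeff_C_mul, coeff_X_pow, mul_ite, mul_one, mul_zero]
  rw [Finset.sum_ite_eq]
  split_ifs with h
  · rfl
  · rw [Tnk_zero_of_lt m c n k (by simpa using h)]; simp

lemma Tpoly_natDegree (m c n : ℕ) : (Tpoly m c n).natDegree = n := by
  apply natDegree_eq_of_le_of_coeff_ne_zero
  · rw [natDegree_le_iff_coeff_eq_zero]
    intro k hk
    rw [Tpoly_coeff, Tnk_zero_of_lt m c n k hk]; simp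
  · rw [Tpoly_coeff, Tnk_self]; simp

lemma Tpoly_monic (m c n : ℕ) : (Tpoly m c n).Monic := by
  rw [Monic, leadingCoeff, Tpoly_natDegree, Tpoly_coeff, Tnk_self]; simp

lemma Tpoly_succ (m c n : ℕ) : Tpoly m c (n + 1) =
    (X + C (c : ℝ)) * Tpoly m c n + C (m : ℝ) * (X * derivative (Tpoly m c n)) := by
  ext k
  rw [add_mul, coeff_add, coeff_add, coeff_C_mul, coeff_C_mul]
  cases k with
  | zero => simp [Tpoly_coeff, Tnk]
  | succ k =>
    rw [coeff_X_mul, coeff_X_mul, coeff_derivative]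
    simp only [Tpoly_coeff, Tnk]
    push_cast
    ring

lemma Tpoly_eval_zero (m c n : ℕ) : (Tpoly m c n).eval 0 = (c : ℝ) ^ n := by
  induction n with
  | zero => simp [Tpoly, Tnk]
  | succ n ih => rw [Tpoly_succ]; simp [ih, pow_succ']

lemma sign_deriv (n : ℕ) (r : ℕ → ℝ) (hr : ∀ i j, i < j → j < n → r j < r i)
    (i : ℕ) (hi : i < n) :
    0 < (-1 : ℝ) ^ i * (derivative (∏ j ∈ Finset.range n, (X - C (r j)))).eval (r i) := by
  have h1 : (∏ j ∈ Finset.range n, (X - C (r j))) =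
      (X - C (r i)) * ((∏ j ∈ Finset.range i, (X - C (r j))) *
        (∏ j ∈ Finset.Ico (i + 1) n, (X - C (r j)))) := by
    rw [← Finset.prod_range_mul_prod_Ico _ (show i + 1 ≤ n from hi), Finset.prod_range_succ]
    ring
  rw [h1, derivative_mul]
  simp only [derivative_sub, derivative_X, derivative_C, sub_zero, one_mul, eval_add, eval_mul,
    eval_sub, eval_X, eval_C, sub_self, zero_mul, add_zero, eval_prod]
  rw [← mul_assoc]
  apply mul_pos
  · have : (-1 : ℝ) ^ i = ∏ j ∈ Finset.range i, (-1 : ℝ) := by simp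
    rw [this, ← Finset.prod_mul_distrib]
    apply Finset.prod_pos
    intro j hj
    have := hr j i (by simpa using hj) hi
    linarith
  · apply Finset.prod_pos
    intro j hj
    rw [Finset.mem_Ico] at hj
    have := hr i j (by omega) hj.2
    linarith

lemma exists_low (f : ℝ[X]) (hf : f.Monic) (hd : 0 < f.natDegree) (b : ℝ) :
    ∃ L, L < b ∧ 0 < (-1 : ℝ) ^ f.natDegree * f.eval L := by
  set g : ℝ[X] := C ((-1 : ℝ) ^ f.natDegree) * f.comp (-X) with hg
  have hne : ((-1 : ℝ) ^ f.natDegree) ≠ 0 := by simp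
  have hgd : g.natDegree = f.natDegree := by
    rw [hg, natDegree_C_mul hne, natDegree_comp]; simp
  have hl : g.leadingCoeff = 1 := by
    rw [hg, leadingCoeff_mul, leadingCoeff_C, leadingCoeff_comp (by simp)]
    simp [hf.leadingCoeff, ← mul_pow]
  have ht := g.tendsto_atTop_of_leadingCoeff_nonneg
    (natDegree_pos_iff_degree_pos.mp (by omega)) (by rw [hl]; norm_num)
  obtain ⟨x, hx1, hx2⟩ := ((ht.eventually_gt_atTop 0).and
    (Filter.eventually_gt_atTop (-b))).exists
  refine ⟨-x, by linarith, ?_⟩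
  simpa [hg] using hx1

lemma roots_of_signs (f : ℝ[X]) (hf : f.Monic) (N : ℕ) (hN : f.natDegree = N) (p : ℕ → ℝ)
    (hp0 : p 0 = 0)
    (hp : ∀ i, i < N → p (i + 1) < p i) (hs : ∀ i, i ≤ N → 0 < (-1 : ℝ) ^ i * f.eval (p i)) :
    ∃ q : ℕ → ℝ, (∀ i j, i < j → j < N → q j < q i) ∧ (∀ i, i < N → q i < 0) ∧
      f = ∏ j ∈ Finset.range N, (X - C (q j)) := by
  have hmono : ∀ j, j ≤ N → ∀ i, i ≤ j → p j ≤ p i := by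
    intro j
    induction j with
    | zero => intro _ i hi; obtain rfl : i = 0 := by omega
              exact le_rfl
    | succ j ih =>
      intro hj i hi
      rcases Nat.lt_or_ge i (j + 1) with h | h
      · exact (hp j (by omega)).le.trans (ih (by omega) i (by omega))
      · obtain rfl : i = j + 1 := by omega
        exact le_rfl
  have hex : ∀ i, ∃ x, i < N → p (i + 1) < x ∧ x < p i ∧ f.eval x = 0 := by
    intro i
    by_cases hi : i < N
    · have h1 := hs i hi.le
      have h2 := hs (i + 1) hi
      have hc : ContinuousOn (fun x => (-1 : ℝ) ^ i * f.eval x) (Set.Icc (p (i + 1)) (p i)) := by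
        fun_prop
      obtain ⟨x, hx, hx0⟩ := intermediate_value_Ioo (hp i hi).le hc
        (show (0 : ℝ) ∈ Set.Ioo _ _ from ⟨by
          simp only [pow_succ] at h2 ⊢; linarith, h1⟩)
      refine ⟨x, fun _ => ⟨hx.1, hx.2, ?_⟩⟩
      simpa using hx0
    · exact ⟨0, fun h => absurd h hi⟩
  choose q hq using hex
  have hanti : ∀ i j, i < j → j < N → q j < q i := fun i j hij hj =>
    ((hq j hj).2.1.trans_le (hmono j hj.le (i + 1) hij)).trans (hq i (by omega)).1
  refine ⟨q, hanti, fun i hi => (hq i hi).2.1.trans_le (hp0 ▸ hmono i hi.le 0 (by omega)), ?_⟩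
  have hdvd : (∏ j ∈ Finset.range N, (X - C (q j))) ∣ f := by
    apply Finset.prod_dvd_of_coprime
    · intro i hi j hj hij
      apply isCoprime_X_sub_C_of_isUnit_sub
      rw [isUnit_iff_ne_zero, sub_ne_zero]
      simp only [Finset.coe_range, Set.mem_Iio] at hi hj
      rcases lt_or_gt_of_ne hij with h | h
      · exact (hanti i j h hj).ne'
      · exact (hanti j i h hi).ne
    · intro i hi
      rw [dvd_iff_isRoot]
      exact (hq i (by simpa using hi)).2.2
  have hm : (∏ j ∈ Finset.range N, (X - C (q j))).Monic :=
    monic_prod_of_monic _ _ fun i _ => monic_X_sub_C _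
  apply (eq_of_monic_of_dvd_of_natDegree_le hm hf hdvd _)
  rw [natDegree_prod_of_monic _ _ fun i _ => monic_X_sub_C _]
  simp [hN]

lemma Tpoly_factor (m c : ℕ) (hm : 0 < m) (hc : 0 < c) (n : ℕ) :
    ∃ q : ℕ → ℝ, (∀ i j, i < j → j < n → q j < q i) ∧ (∀ i, i < n → q i < 0) ∧
      Tpoly m c n = ∏ j ∈ Finset.range n, (X - C (q j)) := by
  induction n with
  | zero => exact ⟨fun _ => 0, by simp, by simp, by simp [Tpoly, Tnk]⟩
  | succ n ih =>
    obtain ⟨r, hr, hneg, hT⟩ := ih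
    have hd := Tpoly_natDegree m c (n + 1)
    obtain ⟨L, hL, hLs⟩ := exists_low _ (Tpoly_monic m c (n + 1)) (by omega)
      (if n = 0 then 0 else r (n - 1))
    rw [hd] at hLs
    apply roots_of_signs _ (Tpoly_monic m c (n + 1)) (n + 1) hd
      (fun i => if i = 0 then 0 else if i = n + 1 then L else r (i - 1))
    · simp
    · intro i hi
      rcases Nat.eq_zero_or_pos i with rfl | h0
      · by_cases hn : n = 0
        · simp_all
        · have := hneg 0 (by omega)
          simpa [hn] using this
      · by_cases hn : i = n
        · subst hn
          simpa [h0.ne'] using hL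
        · have := hr (i - 1) i (by omega) (by omega)
          have h2 : i ≠ n + 1 := by omega
          simpa [h0.ne', hn, h2] using this
    · intro i hi
      rcases Nat.eq_zero_or_pos i with rfl | h0
      · simp only [if_true, Tpoly_eval_zero]
        positivity
      · by_cases hn : i = n + 1
        · subst hn
          simpa using hLs
        · obtain ⟨i, rfl⟩ : ∃ j, i = j + 1 := ⟨i - 1, by omega⟩
          have hin : i < n := by omega
          have h1 := sign_deriv n r hr i hin
          rw [← hT] at h1
          have h2 : (Tpoly m c n).eval (r i) = 0 := by
            rw [hT, eval_prod]
            exact Finset.prod_eq_zero (Finset.mem_range.mpr hin) (by simp)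
          simp only [hn, if_false, Nat.add_sub_cancel, Nat.succ_ne_zero]
          rw [Tpoly_succ]
          simp only [eval_add, eval_mul, eval_X, eval_C, h2]
          have h3 := hneg i hin
          have h4 : (0 : ℝ) < m := by exact_mod_cast hm
          have := mul_pos (mul_pos h4 (neg_pos.mpr h3)) h1
          rw [pow_succ]
          linarith

/-- For `n ≥ 1`, the polynomial `T_n(x)` has `n` distinct negative real roots:
its degree is `n`, it has `n` pairwise distinct real roots, and every real root
is negative. -/
theorem stmt_3 (m c : ℕ) (hm : 0 < m) (hc : 0 < c) (n : ℕ) (hn : 1 ≤ n) :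
    (Tpoly m c n).degree = n ∧
    (Tpoly m c n).roots.toFinset.card = n ∧
    ∀ x ∈ (Tpoly m c n).roots, x < 0 := by
  have hne := (Tpoly_monic m c n).ne_zero
  obtain ⟨q, hq, hneg, hT⟩ := Tpoly_factor m c hm hc n
  have hroots : (Tpoly m c n).roots = (Multiset.range n).map q := by
    rw [hT]
    have := roots_multiset_prod_X_sub_C ((Multiset.range n).map q)
    rw [Multiset.map_map] at this
    exact this
  refine ⟨by rw [degree_eq_natDegree hne, Tpoly_natDegree], ?_, ?_⟩
  · rw [hroots, Multiset.toFinset_card_of_nodup]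
    · simp
    · apply Multiset.Nodup.map_on _ (Multiset.nodup_range n)
      intro i hi j hj hij
      rw [Multiset.mem_range] at hi hj
      rcases lt_trichotomy i j with h | h | h
      · exact absurd hij (hq i j h hj).ne'
      · exact h
      · exact absurd hij (hq j i h hi).ne
  · intro x hx
    rw [hroots, Multiset.mem_map] at hx
    obtain ⟨i, hi, rfl⟩ := hx
    exact hneg i (by simpa using hi)
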